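/- Main eigenvalue bound: let q ≥ 2 be an integer, β ∈ (0,1/2], V(x) = (x(1-x))^β, ψ_i(x) = Σ_{j=i+1}^q C(q,j)x^j(1-x)^{q-j}, and (T_q V)(x) = (1/q)Σ_{i=0}^{q-1} V(ψ_i(x)). Then for all x ∈ (0,1), (T_q V)(x) ≤ (6/√(qβ))·(1/4)^{1/2-β}·V(x). -/

import Mathlib

/-- Binomial tail probability `ψ_i(x) = P(Bin(q,x) ≥ i+1)`. -/
noncomputable def psi (q i : ℕ) (x : ℝ) : ℝ :=
  ∑ j ∈ Finset.Icc (i + 1) q, (q.choose j : ℝ) * x ^ j * (1 - x) ^ (q - j)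

/-- The Lyapunov function `V(x) = (x(1-x))^β`. -/
noncomputable def Vfun (β x : ℝ) : ℝ := (x * (1 - x)) ^ β

/-!
Write `s = q x (1 - x)` for the variance of `Bin(q, x)` and `D_i = ψ_i (1 - ψ_i)`. Two bounds on
`D_i` are combined. Chernoff's inequality gives `D_i ≤ exp (t² s - t |i - q x|)` for `0 ≤ t ≤ 1`, so
that `∑ D_i ^ β` is dominated by a two-sided geometric series; with `t` of order `(β s)^(-1/2)` this
is `O(√(s / β))`, which is what is needed when `β s ≥ 4/9`. When `β s ≤ 4/9` the smallness of `s`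
must be seen: the Poincaré inequality for the binomial law gives `D_i ≤ s P(Bin(q - 1, x) = i)`, and
Chernoff's inequality with `t = 1` then yields `∑ D_i ^ β ≤ s ^ β min(q, 4 / β)`. The constant `6`
comes out exactly from `exp (4/9) ≤ 8/5` and `β ^ β ≥ 2/3`.
-/

open Finset Real

section BinomialWeight

/-- The probability `P(Bin(n, x) = k)`, as a polynomial expression over an arbitrary commutative
ring; it vanishes for `k > n`. -/
def binomialWeight {R : Type*} [CommRing R] (n k : ℕ) (x : R) : R :=
  n.choose k * x ^ k * (1 - x) ^ (n - k)

lemma binomialWeight_nonneg {R : Type*} [CommRing R] [LinearOrder R] [IsStrictOrderedRing R]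
    {x : R} (hx : x ∈ Set.Icc 0 1) (n k : ℕ) : 0 ≤ binomialWeight n k x :=
  mul_nonneg (mul_nonneg (Nat.cast_nonneg _) (pow_nonneg hx.1 _))
    (pow_nonneg (sub_nonneg.2 hx.2) _)

variable {R : Type*} [CommRing R]

lemma sum_binomialWeight (n : ℕ) (x : R) : ∑ j ∈ range (n + 1), binomialWeight n j x = 1 := by
  simpa [bernsteinPolynomial, binomialWeight, Polynomial.eval_finsetSum] using
    congrArg (Polynomial.eval x) (bernsteinPolynomial.sum R n)

lemma succ_mul_binomialWeight_succ (n k : ℕ) (x : R) :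
    (k + 1) * binomialWeight (n + 1) (k + 1) x = (n + 1) * x * binomialWeight n k x := by
  have absorption : ((n : R) + 1) * n.choose k = (n + 1).choose (k + 1) * (k + 1) :=
    mod_cast congrArg (Nat.cast (R := R)) (Nat.add_one_mul_choose_eq n k)
  simp only [binomialWeight, Nat.add_sub_add_right]
  linear_combination -(x ^ (k + 1) * (1 - x) ^ (n - k)) * absorption

lemma binomialWeight_succ_succ (n k : ℕ) (x : R) :
    binomialWeight (n + 1) (k + 1) x =
      x * binomialWeight n k x + (1 - x) * binomialWeight n (k + 1) x := by
  rcases lt_or_ge k n with hkn | hnk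
  · obtain ⟨d, rfl⟩ := Nat.exists_eq_add_of_lt hkn
    have exponents : k + d + 1 - k = d + 1 ∧ k + d + 1 - (k + 1) = d := by omega
    simp only [binomialWeight, Nat.add_sub_add_right, Nat.choose_succ_succ' (k + d + 1) k,
      exponents]
    push_cast
    ring
  · simp only [binomialWeight, Nat.add_sub_add_right, Nat.choose_succ_succ' n k,
      Nat.choose_eq_zero_of_lt (Nat.lt_succ_of_le hnk)]
    push_cast
    ring

lemma sum_range_mean_sub_mul_binomialWeight (n k : ℕ) (x : R) :
    ∑ j ∈ range (k + 1), ((n + 1) * x - j) * binomialWeight (n + 1) j x =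
      (n + 1) * (x * (1 - x)) * binomialWeight n k x := by
  induction k with
  | zero =>
    simp only [zero_add, range_one, sum_singleton, Nat.cast_zero, binomialWeight,
      Nat.choose_zero_right, Nat.cast_one, pow_zero, Nat.sub_zero]
    ring
  | succ k ih =>
    rw [sum_range_succ, ih]
    push_cast
    linear_combination (n + 1) * x * binomialWeight_succ_succ n k x -
      succ_mul_binomialWeight_succ n k x

end BinomialWeight

section BinomialTail

lemma one_sub_psi {q i : ℕ} (hi : i ≤ q) (x : ℝ) :
    1 - psi q i x = ∑ j ∈ range (i + 1), binomialWeight q j x := by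
  rw [sub_eq_iff_eq_add, ← sum_binomialWeight q x,
    ← sum_range_add_sum_Ico _ (add_le_add_left hi 1), Ico_add_one_right_eq_Icc]
  rfl

variable {x : ℝ} (hx : x ∈ Set.Icc 0 1)
include hx

lemma psi_nonneg (q i : ℕ) : 0 ≤ psi q i x :=
  sum_nonneg fun j _ => binomialWeight_nonneg hx q j

lemma psi_le_one {q i : ℕ} (hi : i ≤ q) : psi q i x ≤ 1 := by
  rw [← sub_nonneg, one_sub_psi hi]
  exact sum_nonneg fun j _ => binomialWeight_nonneg hx q j

lemma psi_mul_one_sub_psi_nonneg {q i : ℕ} (hi : i ≤ q) : 0 ≤ psi q i x * (1 - psi q i x) :=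
  mul_nonneg (psi_nonneg hx q i) (sub_nonneg.2 (psi_le_one hx hi))

/- The right-hand side is the partial mean `E[(X - μ) 1_{X > i}] = E[(μ - X) 1_{X ≤ i}]`, which is
at least `(i + 1 - μ) ψ_i` and at least `(μ - i) (1 - ψ_i)`. -/
lemma psi_mul_one_sub_psi_le_binomialWeight {n i : ℕ} (hi : i ≤ n + 1) :
    psi (n + 1) i x * (1 - psi (n + 1) i x) ≤ (n + 1) * (x * (1 - x)) * binomialWeight n i x := by
  set μ : ℝ := (n + 1) * x
  set w : ℕ → ℝ := fun j => binomialWeight (n + 1) j x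
  set M : ℝ := (n + 1) * (x * (1 - x)) * binomialWeight n i x
  have hw : ∀ j, 0 ≤ w j := binomialWeight_nonneg hx (n + 1)
  have lower_mean : ∑ j ∈ range (i + 1), (μ - j) * w j = M :=
    sum_range_mean_sub_mul_binomialWeight n i x
  have upper_mean : ∑ j ∈ Icc (i + 1) (n + 1), (j - μ) * w j = M := by
    have total : ∑ j ∈ range (n + 1 + 1), (μ - j) * w j = 0 := by
      rw [sum_range_mean_sub_mul_binomialWeight n (n + 1) x]
      simp [binomialWeight]
    rw [← sum_range_add_sum_Ico _ (add_le_add_left hi 1), Ico_add_one_right_eq_Icc,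
      lower_mean] at total
    simp only [← neg_sub μ, neg_mul, sum_neg_distrib]
    linarith
  have lower : (μ - i) * (1 - psi (n + 1) i x) ≤ M := by
    rw [one_sub_psi hi, ← lower_mean, mul_sum]
    refine sum_le_sum fun j hj => mul_le_mul_of_nonneg_right ?_ (hw j)
    gcongr
    exact mem_range_succ_iff.1 hj
  have upper : (i + 1 - μ) * psi (n + 1) i x ≤ M := by
    rw [← upper_mean, psi, mul_sum]
    refine sum_le_sum fun j hj => mul_le_mul_of_nonneg_right ?_ (hw j)
    gcongr
    exact mod_cast (mem_Icc.1 hj).1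
  linarith [mul_le_mul_of_nonneg_left lower (psi_nonneg hx (n + 1) i),
    mul_le_mul_of_nonneg_left upper (sub_nonneg.2 (psi_le_one hx hi))]

end BinomialTail

section Chernoff

variable {x t : ℝ} (hx : x ∈ Set.Icc 0 1)
include hx

lemma mul_exp_add_one_sub_le_exp (ht : |t| ≤ 1) :
    x * exp t + (1 - x) ≤ exp (t * x + t ^ 2 * (x * (1 - x))) := by
  have exp_le {y : ℝ} (hy : y ∈ Set.Icc 0 1) (u : ℝ) (hu : |u| ≤ 1) :
      exp (u * y) ≤ 1 + u * y + (u * y) ^ 2 := by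
    have huy : |u * y| ≤ 1 := by
      rw [abs_mul, abs_of_nonneg hy.1]
      exact mul_le_one₀ hu hy.1 hy.2
    linarith [(abs_le.1 (abs_exp_sub_one_sub_id_le huy)).2]
  have centered : x * exp (t * (1 - x)) + (1 - x) * exp (-t * x) ≤
      exp (t ^ 2 * (x * (1 - x))) := by
    have hx' : 1 - x ∈ Set.Icc (0 : ℝ) 1 := ⟨sub_nonneg.2 hx.2, sub_le_self 1 hx.1⟩
    calc
      _ ≤ x * (1 + t * (1 - x) + (t * (1 - x)) ^ 2) + (1 - x) * (1 + -t * x + (-t * x) ^ 2) := by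
        gcongr
        · exact hx.1
        · exact exp_le hx' t ht
        · exact hx'.1
        · exact exp_le hx (-t) (by rwa [abs_neg])
      _ = t ^ 2 * (x * (1 - x)) + 1 := by ring
      _ ≤ exp (t ^ 2 * (x * (1 - x))) := add_one_le_exp _
  calc
    x * exp t + (1 - x) = exp (t * x) * (x * exp (t * (1 - x)) + (1 - x) * exp (-t * x)) := by
      rw [mul_add, mul_left_comm, mul_left_comm _ (1 - x), ← exp_add, ← exp_add]
      have cancel : exp (t * x + -t * x) = 1 := by
        rw [← add_mul, add_neg_cancel, zero_mul, exp_zero]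
      rw [cancel, mul_one, ← mul_add, add_sub_cancel, mul_one]
    _ ≤ exp (t * x) * exp (t ^ 2 * (x * (1 - x))) := by gcongr
    _ = exp (t * x + t ^ 2 * (x * (1 - x))) := (exp_add _ _).symm

omit hx in
lemma sum_binomialWeight_mul_exp (n : ℕ) :
    ∑ j ∈ range (n + 1), binomialWeight n j x * exp (t * j) = (x * exp t + (1 - x)) ^ n := by
  rw [add_pow]
  refine sum_congr rfl fun j _ => ?_
  rw [binomialWeight, mul_comm t, exp_nat_mul, mul_pow]
  ring

/- For `t > 0` the hypothesis on `A` says `a ≤ j`, for `t < 0` it says `j ≤ a`. -/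
lemma sum_binomialWeight_le_exp (ht : |t| ≤ 1) {n : ℕ} {A : Finset ℕ} (hA : A ⊆ range (n + 1))
    {a : ℝ} (ha : ∀ j ∈ A, t * a ≤ t * j) :
    ∑ j ∈ A, binomialWeight n j x ≤ exp (t ^ 2 * (n * (x * (1 - x))) - t * (a - n * x)) := by
  have hw := binomialWeight_nonneg hx n
  have markov : (∑ j ∈ A, binomialWeight n j x) * exp (t * a) ≤ (x * exp t + (1 - x)) ^ n :=
    calc
      _ ≤ ∑ j ∈ A, binomialWeight n j x * exp (t * j) := by
        rw [sum_mul]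
        exact sum_le_sum fun j hj => mul_le_mul_of_nonneg_left (exp_le_exp.2 (ha j hj)) (hw j)
      _ ≤ ∑ j ∈ range (n + 1), binomialWeight n j x * exp (t * j) :=
        sum_le_sum_of_subset_of_nonneg hA fun j _ _ => mul_nonneg (hw j) (exp_pos _).le
      _ = (x * exp t + (1 - x)) ^ n := sum_binomialWeight_mul_exp n
  calc
    _ ≤ (x * exp t + (1 - x)) ^ n / exp (t * a) := (le_div_iff₀ (exp_pos _)).2 markov
    _ ≤ exp (t * x + t ^ 2 * (x * (1 - x))) ^ n / exp (t * a) := by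
      have : 0 ≤ x * exp t + (1 - x) :=
        add_nonneg (mul_nonneg hx.1 (exp_pos t).le) (sub_nonneg.2 hx.2)
      gcongr
      exact mul_exp_add_one_sub_le_exp hx ht
    _ = _ := by
      rw [← exp_nat_mul, ← exp_sub]
      ring_nf

variable (ht₀ : 0 ≤ t) (ht₁ : t ≤ 1)
include ht₀ ht₁

lemma binomialWeight_le_exp {n i : ℕ} (hi : i ≤ n) :
    binomialWeight n i x ≤ exp (t ^ 2 * (n * (x * (1 - x))) - t * |i - n * x|) := by
  have bound (u : ℝ) (hu : |u| ≤ 1) :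
      binomialWeight n i x ≤ exp (u ^ 2 * (n * (x * (1 - x))) - u * (i - n * x)) := by
    simpa using sum_binomialWeight_le_exp hx hu (A := {i}) (a := i)
      (by simpa using Nat.lt_succ_of_le hi) (by simp)
  have ht : |t| ≤ 1 := by rwa [abs_of_nonneg ht₀]
  rcases abs_choice (i - n * x : ℝ) with h | h <;> rw [h]
  · exact bound t ht
  · simpa only [neg_sq, neg_mul_comm] using bound (-t) (by rwa [abs_neg])

lemma psi_mul_one_sub_psi_le_exp {q i : ℕ} (hi : i ≤ q) :
    psi q i x * (1 - psi q i x) ≤ exp (t ^ 2 * (q * (x * (1 - x))) - t * |i - q * x|) := by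
  have ht : |t| ≤ 1 := by rwa [abs_of_nonneg ht₀]
  have hψ₀ := psi_nonneg hx q i
  have hψ₁ := psi_le_one hx hi
  rcases abs_choice (i - q * x : ℝ) with h | h <;> rw [h]
  · calc
      _ ≤ psi q i x := mul_le_of_le_one_right hψ₀ (sub_le_self 1 hψ₀)
      _ ≤ exp (t ^ 2 * (q * (x * (1 - x))) - t * (i - q * x)) :=
        sum_binomialWeight_le_exp hx ht
          (fun j hj => mem_range.2 (Nat.lt_succ_of_le (mem_Icc.1 hj).2))
          fun j hj => by
            gcongr
            exact Nat.le_of_succ_le (mem_Icc.1 hj).1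
  · calc
      _ ≤ 1 - psi q i x := mul_le_of_le_one_left (sub_nonneg.2 hψ₁) hψ₁
      _ = ∑ j ∈ range (i + 1), binomialWeight q j x := one_sub_psi hi x
      _ ≤ exp ((-t) ^ 2 * (q * (x * (1 - x))) - -t * (i - q * x)) :=
        sum_binomialWeight_le_exp hx (by rwa [abs_neg])
          (range_mono (Nat.succ_le_succ hi))
          fun j hj => mul_le_mul_of_nonpos_left
            (Nat.cast_le.2 (Nat.lt_succ_iff.1 (mem_range.1 hj))) (neg_nonpos.2 ht₀)
      _ = _ := by ring_nf

end Chernoff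

section TwoSidedGeometric

variable {τ : ℝ} (hτ : 0 < τ)
include hτ

lemma hasSum_exp_neg_mul_abs_sub (μ : ℝ) :
    HasSum (fun k : ℤ => exp (-(τ * |k - μ|)))
      ((exp (-(τ * (1 - Int.fract μ))) + exp (-(τ * Int.fract μ))) * (1 - exp (-τ))⁻¹) := by
  have geometric : HasSum (fun n : ℕ => exp (-τ) ^ n) (1 - exp (-τ))⁻¹ :=
    hasSum_geometric_of_lt_one (exp_pos _).le (exp_lt_one_iff.2 (neg_lt_zero.2 hτ))
  have hθ₀ := Int.fract_nonneg μ
  have hθ₁ := Int.fract_lt_one μ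
  have hμ : μ - Int.fract μ = ⌊μ⌋ := Int.self_sub_fract μ
  have right (n : ℕ) : exp (-(τ * |((⌊μ⌋ + 1 + (n : ℤ) : ℤ) : ℝ) - μ|)) =
      exp (-(τ * (1 - Int.fract μ))) * exp (-τ) ^ n := by
    push_cast
    rw [abs_of_nonneg (by linarith [n.cast_nonneg (α := ℝ)]), ← exp_nat_mul, ← exp_add, ← hμ]
    ring_nf
  have left (n : ℕ) : exp (-(τ * |((⌊μ⌋ + 1 + -((n : ℤ) + 1) : ℤ) : ℝ) - μ|)) =
      exp (-(τ * Int.fract μ)) * exp (-τ) ^ n := by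
    push_cast
    rw [abs_of_nonpos (by linarith [n.cast_nonneg (α := ℝ)]), ← exp_nat_mul, ← exp_add, ← hμ]
    ring_nf
  rw [add_mul, ← (Equiv.addLeft (⌊μ⌋ + 1)).hasSum_iff]
  refine HasSum.of_nat_of_neg_add_one ?_ ?_
  · simpa only [Function.comp_apply, Equiv.coe_addLeft, right] using geometric.mul_left _
  · simpa only [Function.comp_apply, Equiv.coe_addLeft, left] using geometric.mul_left _

lemma tsum_exp_neg_mul_abs_sub_le (μ : ℝ) :
    ∑' k : ℤ, exp (-(τ * |k - μ|)) ≤ 1 + 2 / τ := by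
  rw [(hasSum_exp_neg_mul_abs_sub hτ μ).tsum_eq]
  set a := exp (-(τ * (1 - Int.fract μ)))
  set b := exp (-(τ * Int.fract μ))
  set r := exp (-τ)
  have hr : 0 < 1 - r := sub_pos.2 (exp_lt_one_iff.2 (neg_lt_zero.2 hτ))
  have hab : a * b = r := by
    rw [← exp_add, ← neg_add, ← mul_add, sub_add_cancel, mul_one]
  have ha : a ≤ 1 := exp_le_one_iff.2 <| neg_nonpos.2 <|
    mul_nonneg hτ.le (sub_nonneg.2 (Int.fract_lt_one μ).le)
  have hb : b ≤ 1 := exp_le_one_iff.2 <| neg_nonpos.2 <| mul_nonneg hτ.le (Int.fract_nonneg μ)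
  have add_le : a + b ≤ 1 + r := by
    linarith [mul_nonneg (sub_nonneg.2 ha) (sub_nonneg.2 hb)]
  have mul_le : r * τ ≤ 1 - r := by
    have : r * exp τ = 1 := by rw [← exp_add, neg_add_cancel, exp_zero]
    linarith [mul_le_mul_of_nonneg_left (add_one_le_exp τ) (exp_pos (-τ)).le]
  calc
    (a + b) * (1 - r)⁻¹ ≤ (1 + r) * (1 - r)⁻¹ := by gcongr
    _ = 1 + 2 * (r / (1 - r)) := by field_simp; ring
    _ ≤ 1 + 2 * (1 / τ) := by
      have : r / (1 - r) ≤ 1 / τ := by rwa [div_le_div_iff₀ hr hτ, one_mul]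
      gcongr
    _ = 1 + 2 / τ := by ring

lemma sum_exp_neg_mul_abs_sub_le (μ : ℝ) (A : Finset ℕ) :
    ∑ i ∈ A, exp (-(τ * |i - μ|)) ≤ 1 + 2 / τ :=
  calc
    _ = ∑ k ∈ A.map Nat.castEmbedding, exp (-(τ * |((k : ℤ) : ℝ) - μ|)) := by simp
    _ ≤ ∑' k : ℤ, exp (-(τ * |k - μ|)) :=
      (hasSum_exp_neg_mul_abs_sub hτ μ).summable.sum_le_tsum _ fun _ _ => (exp_pos _).le
    _ ≤ 1 + 2 / τ := tsum_exp_neg_mul_abs_sub_le hτ μ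

omit hτ in
lemma sum_rpow_le_of_le_exp {β t a μ : ℝ} (hβ : 0 < β) (ht : 0 < t) {A : Finset ℕ} {f : ℕ → ℝ}
    (hf₀ : ∀ i ∈ A, 0 ≤ f i) (hf : ∀ i ∈ A, f i ≤ exp (a - t * |i - μ|)) :
    ∑ i ∈ A, f i ^ β ≤ exp (β * a) * (1 + 2 / (β * t)) :=
  calc
    _ ≤ ∑ i ∈ A, exp (β * a) * exp (-(β * t * |i - μ|)) := by
      refine sum_le_sum fun i hi => (rpow_le_rpow (hf₀ i hi) (hf i hi) hβ.le).trans_eq ?_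
      rw [← exp_mul, ← exp_add]
      ring_nf
    _ ≤ exp (β * a) * (1 + 2 / (β * t)) := by
      rw [← mul_sum]
      gcongr
      exact sum_exp_neg_mul_abs_sub_le (mul_pos hβ ht) μ A

end TwoSidedGeometric

section Numerics

lemma exp_div_le_of_exp_one_pow_le {m n : ℕ} (hn : n ≠ 0) {c : ℝ} (hc : 0 ≤ c)
    (h : exp 1 ^ m ≤ c ^ n) : exp (m / n) ≤ c := by
  refine le_of_pow_le_pow_left₀ hn hc (le_of_eq_of_le ?_ h)
  rw [← exp_nat_mul, ← exp_nat_mul, mul_div_cancel₀ _ (Nat.cast_ne_zero.2 hn), mul_one]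

lemma exp_one_pow_le (m : ℕ) : exp 1 ^ m ≤ (2.72 : ℝ) ^ m := by
  gcongr
  linarith [exp_one_lt_d9]

lemma exp_four_ninths_le : exp (4 / 9) ≤ 8 / 5 :=
  mod_cast exp_div_le_of_exp_one_pow_le (m := 4) (n := 9) (c := 8 / 5) (by norm_num) (by norm_num)
    ((exp_one_pow_le 4).trans (by norm_num))

lemma exp_three_eighths_le : exp (3 / 8) ≤ 3 / 2 :=
  mod_cast exp_div_le_of_exp_one_pow_le (m := 3) (n := 8) (c := 3 / 2) (by norm_num) (by norm_num)
    ((exp_one_pow_le 3).trans (by norm_num))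

lemma exp_neg_exp_neg_one_le_rpow_self {y : ℝ} (hy : 0 < y) : exp (-exp (-1)) ≤ y ^ y := by
  have log_le : -log y ≤ exp (-1) / y :=
    calc
      -log y = -log y - 1 + 1 := by ring
      _ ≤ exp (-log y - 1) := add_one_le_exp _
      _ = exp (-1) / y := by rw [sub_eq_neg_add, exp_add, exp_neg (log y), exp_log hy]; rfl
  rw [rpow_def_of_pos hy, exp_le_exp]
  linarith [(le_div_iff₀ hy).1 log_le]

lemma two_thirds_le_rpow_self {y : ℝ} (hy : 0 < y) : 2 / 3 ≤ y ^ y :=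
  calc
    (2 / 3 : ℝ) = (3 / 2)⁻¹ := by norm_num
    _ ≤ (exp (3 / 8))⁻¹ := by gcongr; exact exp_three_eighths_le
    _ = exp (-(3 / 8)) := (exp_neg _).symm
    _ ≤ exp (-exp (-1)) := by gcongr; linarith [exp_neg_one_lt_d9]
    _ ≤ y ^ y := exp_neg_exp_neg_one_le_rpow_self hy

lemma one_add_two_div_le {τ : ℝ} (hτ₀ : 0 < τ) (hτ : τ ≤ 1 / 2) : 1 + 2 / τ ≤ 5 / 2 / τ := by
  rw [← div_self hτ₀.ne', ← add_div]
  gcongr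
  linarith

lemma le_rpow_mul_rpow_of_le {N a b θ η : ℝ} (hN : 0 ≤ N) (ha : N ≤ a) (hb : N ≤ b) (hθ : 0 ≤ θ)
    (hη : 0 ≤ η) (h : θ + η = 1) : N ≤ a ^ θ * b ^ η :=
  calc
    N = N ^ θ * N ^ η := by rw [← rpow_add_of_nonneg hN hθ hη, h, rpow_one]
    _ ≤ a ^ θ * b ^ η := by
      have := hN.trans ha
      gcongr

end Numerics

section LyapunovSum

variable {β x : ℝ} (hβ : β ∈ Set.Ioc 0 (1 / 2)) (hx : x ∈ Set.Icc 0 1)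
include hβ hx

lemma sum_Vfun_psi_le_sqrt {q : ℕ} (hs : 4 / 9 ≤ β * (q * (x * (1 - x)))) :
    ∑ i ∈ range q, Vfun β (psi q i x) ≤ 6 * √(q * (x * (1 - x)) / β) := by
  obtain ⟨hβ₀, hβ₁⟩ := hβ
  set s := q * (x * (1 - x))
  set r := √(β * s)
  have hr : 2 / 3 ≤ r := le_sqrt_of_sq_le (by linarith)
  have hr_sq : r ^ 2 = β * s := sq_sqrt (by linarith)
  have hr₀ : 0 < r := by linarith
  set t := 2 / 3 / r
  have ht₀ : 0 < t := by positivity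
  have ht₁ : t ≤ 1 := (div_le_one hr₀).2 hr
  have exponent : β * (t ^ 2 * s) = 4 / 9 := by
    rw [mul_left_comm, ← hr_sq, div_pow, div_mul_cancel₀ _ (by positivity)]
    norm_num
  calc
    _ ≤ exp (β * (t ^ 2 * s)) * (1 + 2 / (β * t)) :=
      sum_rpow_le_of_le_exp hβ₀ ht₀
        (fun i hi => psi_mul_one_sub_psi_nonneg hx (mem_range.1 hi).le)
        fun i hi => psi_mul_one_sub_psi_le_exp hx ht₀.le ht₁ (mem_range.1 hi).le
    _ ≤ 8 / 5 * (5 / 2 / (β * t)) := by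
      rw [exponent]
      gcongr
      · exact exp_four_ninths_le
      · exact one_add_two_div_le (mul_pos hβ₀ ht₀) ((mul_le_of_le_one_right hβ₀.le ht₁).trans hβ₁)
    _ = 6 * (r / β) := by
      simp only [t]
      field_simp
      norm_num
    _ = 6 * √(s / β) := by
      rw [show s / β = β * s / β ^ 2 by field_simp, sqrt_div' _ (sq_nonneg β), sqrt_sq hβ₀.le]

lemma sum_binomialWeight_rpow_le {n : ℕ} (hs : β * (n * (x * (1 - x))) ≤ 4 / 9) :
    ∑ i ∈ range (n + 1), binomialWeight n i x ^ β ≤ 4 / β :=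
  calc
    _ ≤ exp (β * (1 ^ 2 * (n * (x * (1 - x))))) * (1 + 2 / (β * 1)) :=
      sum_rpow_le_of_le_exp hβ.1 one_pos (fun i _ => binomialWeight_nonneg hx n i)
        fun i hi => binomialWeight_le_exp hx zero_le_one le_rfl (mem_range_succ_iff.1 hi)
    _ ≤ 8 / 5 * (5 / 2 / β) := by
      rw [one_pow, one_mul, mul_one]
      have := hβ.1
      gcongr
      · exact (exp_le_exp.2 hs).trans exp_four_ninths_le
      · exact one_add_two_div_le hβ.1 hβ.2
    _ = 4 / β := by ring

omit hβ in
lemma sum_binomialWeight_rpow_le_card (hβ₀ : 0 ≤ β) (n : ℕ) :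
    ∑ i ∈ range (n + 1), binomialWeight n i x ^ β ≤ (n + 1 : ℕ) := by
  have hw := binomialWeight_nonneg hx n
  have hw₁ : ∀ i ∈ range (n + 1), binomialWeight n i x ≤ 1 := fun i hi =>
    (single_le_sum (fun j _ => hw j) hi).trans_eq (sum_binomialWeight n x)
  simpa using sum_le_card_nsmul _ _ 1 fun i hi => rpow_le_one (hw i) (hw₁ i hi) hβ₀

omit hβ in
lemma sum_Vfun_psi_le_sum_binomialWeight_rpow (hβ₀ : 0 ≤ β) (n : ℕ) :
    ∑ i ∈ range (n + 1), Vfun β (psi (n + 1) i x) ≤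
      ((n + 1) * (x * (1 - x))) ^ β * ∑ i ∈ range (n + 1), binomialWeight n i x ^ β := by
  have hs : 0 ≤ (n + 1) * (x * (1 - x)) :=
    mul_nonneg (by positivity) (mul_nonneg hx.1 (sub_nonneg.2 hx.2))
  rw [mul_sum]
  refine sum_le_sum fun i hi => ?_
  have hi' : i ≤ n + 1 := (mem_range.1 hi).le
  rw [← mul_rpow hs (binomialWeight_nonneg hx n i)]
  exact rpow_le_rpow (psi_mul_one_sub_psi_nonneg hx hi')
    (psi_mul_one_sub_psi_le_binomialWeight hx hi') hβ₀

lemma sum_Vfun_psi_le_of_variance_ge {q : ℕ} (hs : 4 / 9 ≤ β * (q * (x * (1 - x)))) :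
    ∑ i ∈ range q, Vfun β (psi q i x) ≤
      6 / √β * (q / 4) ^ (1 / 2 - β) * (q * (x * (1 - x))) ^ β := by
  set s := q * (x * (1 - x))
  have hs₀ : 0 < s := pos_of_mul_pos_right (by linarith) hβ.1.le
  have hsq : s ≤ q / 4 := by
    have : x * (1 - x) ≤ 1 / 4 := by linarith [sq_nonneg (x - 1 / 2)]
    linarith [mul_le_mul_of_nonneg_left this (Nat.cast_nonneg (α := ℝ) q)]
  calc
    _ ≤ 6 * √(s / β) := sum_Vfun_psi_le_sqrt hβ hx hs
    _ = 6 / √β * √s := by rw [sqrt_div hs₀.le]; ring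
    _ = 6 / √β * s ^ (1 / 2 - β) * s ^ β := by
      rw [sqrt_eq_rpow s, mul_assoc, ← rpow_add hs₀, sub_add_cancel]
    _ ≤ 6 / √β * (q / 4) ^ (1 / 2 - β) * s ^ β := by
      have := sub_nonneg.2 hβ.2
      gcongr

lemma sum_Vfun_psi_le_of_variance_le {n : ℕ} (hs : β * ((n + 1 : ℕ) * (x * (1 - x))) ≤ 4 / 9) :
    ∑ i ∈ range (n + 1), Vfun β (psi (n + 1) i x) ≤
      6 / √β * ((n + 1 : ℕ) / 4) ^ (1 / 2 - β) * ((n + 1 : ℕ) * (x * (1 - x))) ^ β := by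
  have ⟨hβ₀, hβ₁⟩ := hβ
  have hx_var : 0 ≤ x * (1 - x) := mul_nonneg hx.1 (sub_nonneg.2 hx.2)
  set q := ((n + 1 : ℕ) : ℝ)
  set N := ∑ i ∈ range (n + 1), binomialWeight n i x ^ β
  have hN₀ : 0 ≤ N := sum_nonneg fun i _ => rpow_nonneg (binomialWeight_nonneg hx n i) β
  have hN_card : N ≤ q := sum_binomialWeight_rpow_le_card hx hβ₀.le n
  have hN_chernoff : N ≤ 4 / β := by
    refine sum_binomialWeight_rpow_le hβ hx (le_trans ?_ hs)
    have : (n : ℝ) ≤ q := Nat.cast_le.2 n.le_succ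
    gcongr
  have interpolation : N / 4 ≤ (q / 4) ^ (1 / 2 - β) * (1 / β) ^ (1 / 2 + β) :=
    le_rpow_mul_rpow_of_le (by positivity) (by gcongr) (by linarith [div_eq_mul_one_div 4 β])
      (by linarith) (by linarith) (by ring)
  have rpow_le : (1 / β) ^ (1 / 2 + β) ≤ 1 / √β * (3 / 2) :=
    calc
      (1 / β) ^ (1 / 2 + β) = 1 / √β * (1 / β ^ β) := by
        rw [rpow_add (by positivity), ← sqrt_eq_rpow, sqrt_div zero_le_one, sqrt_one,
          div_rpow zero_le_one hβ₀.le, one_rpow]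
      _ ≤ 1 / √β * (1 / (2 / 3)) := by
        gcongr
        exact two_thirds_le_rpow_self hβ₀
      _ = 1 / √β * (3 / 2) := by norm_num
  calc
    _ ≤ (q * (x * (1 - x))) ^ β * N := by
      simpa only [q, Nat.cast_succ] using sum_Vfun_psi_le_sum_binomialWeight_rpow hx hβ₀.le n
    _ = 4 * (N / 4) * (q * (x * (1 - x))) ^ β := by ring
    _ ≤ 4 * ((q / 4) ^ (1 / 2 - β) * (1 / √β * (3 / 2))) * (q * (x * (1 - x))) ^ β := by
      gcongr
      exact interpolation.trans (by gcongr)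
    _ = _ := by ring

omit hβ in
lemma normalized_bound_eq {q : ℝ} (hq : 0 < q) :
    6 / √β * (q / 4) ^ (1 / 2 - β) * (q * (x * (1 - x))) ^ β =
      q * (6 / √(q * β) * (1 / 4) ^ (1 / 2 - β) * Vfun β x) := by
  have hy : 0 ≤ x * (1 - x) := mul_nonneg hx.1 (sub_nonneg.2 hx.2)
  have merge : q ^ (1 / 2 - β) * q ^ β = q / √q := by
    rw [← rpow_add hq, sub_add_cancel, ← sqrt_eq_rpow, div_sqrt]
  rw [Vfun, div_eq_mul_one_div q 4, mul_rpow hq.le (by norm_num), mul_rpow hq.le hy,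
    sqrt_mul hq.le]
  linear_combination (6 / √β * (1 / 4) ^ (1 / 2 - β) * (x * (1 - x)) ^ β) * merge

end LyapunovSum

theorem stmt_13 (q : ℕ) (hq : 2 ≤ q) (β : ℝ) (hβ : β ∈ Set.Ioc (0 : ℝ) (1 / 2))
    (x : ℝ) (hx : x ∈ Set.Ioo (0 : ℝ) 1) :
    (1 / (q : ℝ)) * ∑ i ∈ Finset.range q, Vfun β (psi q i x)
      ≤ (6 / Real.sqrt ((q : ℝ) * β)) * (1 / 4 : ℝ) ^ (1 / 2 - β) * Vfun β x := by
  have hx' : x ∈ Set.Icc 0 1 := Set.Ioo_subset_Icc_self hx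
  have hq₀ : (0 : ℝ) < q := Nat.cast_pos.2 (two_pos.trans_le hq)
  rw [one_div, inv_mul_le_iff₀ hq₀, ← normalized_bound_eq hx' hq₀]
  rcases le_total (4 / 9) (β * (q * (x * (1 - x)))) with hs | hs
  · exact sum_Vfun_psi_le_of_variance_ge hβ hx' hs
  · obtain ⟨n, rfl⟩ := Nat.exists_eq_add_of_le' (one_le_two.trans hq)
    exact sum_Vfun_psi_le_of_variance_le hβ hx' hs
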